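/- arXiv:math/0406589 — 2 statements merged into one kernel-verified Lean document; each statement's English description precedes it below -/
import Mathlib

section
/- For a word w = a₁⋯a_n in E_r, define w̄ = Σ_{J ∈ C(n)} J[w], the sum over all compositions J of n of the contracted words J[w]. Then w̄ = Σ_{w₁⋯w_k = R(w)} (−1)^{n−k} w₁ * ⋯ * w_k, where the sum runs over decompositions of the reversed word R(w) into nonempty consecutive subwords. -/
open Finsupp Finset

/-- A letter `z_{i,j}`: first subscript a natural number (positive in intended use),
second subscript in `ℤ/r`. -/
abbrev QLetter (r : ℕ) := ℕ × ZMod r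

/-- The Euler algebra `E_r` as a vector space: formal `ℂ`-linear combinations of words. -/
abbrev EulerAlg (r : ℕ) := List (QLetter r) →₀ ℂ

/-- `[a,b]`: add first subscripts, add second subscripts mod `r`. -/
def ladd {r : ℕ} (a b : QLetter r) : QLetter r := (a.1 + b.1, a.2 + b.2)

/-- Quasi-shuffle product of two words, inductively. -/
noncomputable def qmulW {r : ℕ} : List (QLetter r) → List (QLetter r) → EulerAlg r
  | [], w => Finsupp.single w 1
  | a :: w, [] => Finsupp.single (a :: w) 1
  | a :: w, b :: v =>
      (qmulW w (b :: v)).mapDomain (a :: ·) +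
      (qmulW (a :: w) v).mapDomain (b :: ·) +
      (qmulW w v).mapDomain (ladd a b :: ·)
  termination_by w v => w.length + v.length

/-- Bilinear extension of the quasi-shuffle product to `E_r`. -/
noncomputable def qmul {r : ℕ} (x y : EulerAlg r) : EulerAlg r :=
  x.sum fun w c => y.sum fun v d => (c * d) • qmulW w v
/-- `J[w]`: contraction of a word along a composition of its length. -/
def contract {r n : ℕ} (J : Composition n) (w : List (QLetter r)) : List (QLetter r) :=
  (w.splitWrtComposition J).map fun b => ((b.map Prod.fst).sum, (b.map Prod.snd).sum)

/-- Quasi-shuffle product of a list of words. -/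
noncomputable def qprodW {r : ℕ} : List (List (QLetter r)) → EulerAlg r
  | [] => Finsupp.single [] 1
  | w :: t => qmul (Finsupp.single w 1) (qprodW t)

/-!
Write `C(v)` for the sum of the reversals of all contractions of `v`, so that `C(R(w)) = w̄`. For
two words `u` and `v`, let `Y(u, v)` be the sum, over all ways of writing `v = p q` with `p`
nonempty, of `u * C(q)` followed by the letter to which `p` contracts. Sorting the words in a
product by their last letter gives `(u x) * C(v) = Y(u, x v) + Y(u x, v)` for every letter `x`.
Hence the alternating sum of the products `u * C(v)`, over the splittings `w = u v` with `u`
nonempty, telescopes to `Y(∅, w) = C(w)`. Splitting off the first factor shows that the alternating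
sum of products obeys the same recursion.
-/

section Compositions

variable {α M : Type*} [AddCommMonoid M]

/-- The composition of `n` whose first block is `i + 1` and whose other blocks are those of `J`. -/
def compositionCons {n : ℕ} (i : Fin n) (J : Composition (n - (i + 1))) : Composition n :=
  ((Composition.single (i + 1) i.val.succ_pos).append J).cast (Nat.add_sub_of_le i.isLt)

theorem compositionCons_blocks {n : ℕ} (i : Fin n) (J : Composition (n - (i + 1))) :
    (compositionCons i J).blocks = ((i : ℕ) + 1) :: J.blocks := rfl

theorem compositionCons_bijective {n : ℕ} (hn : n ≠ 0) :
    Function.Bijective fun p : (i : Fin n) × Composition (n - (i + 1)) =>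
      compositionCons p.1 p.2 := by
  constructor
  · rintro ⟨i, J⟩ ⟨i', J'⟩ h
    have hblocks := congrArg Composition.blocks h
    simp only [compositionCons_blocks, List.cons.injEq, add_left_inj] at hblocks
    obtain rfl := Fin.ext hblocks.1
    obtain rfl := Composition.ext hblocks.2
    rfl
  · rintro ⟨_ | ⟨b, bs⟩, hpos, hsum⟩
    · exact absurd hsum.symm hn
    · have hb : 0 < b := hpos List.mem_cons_self
      rw [List.sum_cons] at hsum
      refine ⟨⟨⟨b - 1, by lia⟩, ⟨bs, fun h => hpos (List.mem_cons_of_mem _ h), ?_⟩⟩, ?_⟩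
      · dsimp only
        lia
      · refine Composition.ext ?_
        simp only [compositionCons_blocks, Nat.sub_add_cancel hb]

theorem sum_splitWrtComposition_of_ne_nil (f : List (List α) → M) {w : List α} (hw : w ≠ []) :
    ∑ J : Composition w.length, f (w.splitWrtComposition J) =
      ∑ i ∈ range w.length, ∑ J : Composition (w.length - (i + 1)),
        f (w.take (i + 1) :: (w.drop (i + 1)).splitWrtComposition J) := by
  rw [← Fin.sum_univ_eq_sum_range fun i => ∑ J : Composition (w.length - (i + 1)),
      f (w.take (i + 1) :: (w.drop (i + 1)).splitWrtComposition J), ← Fintype.sum_sigma',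
    ← (compositionCons_bijective (mt List.length_eq_zero_iff.1 hw)).sum_comp]
  refine Fintype.sum_congr _ _ fun p => ?_
  rw [List.splitWrtComposition, compositionCons_blocks, List.splitWrtCompositionAux_cons]
  rfl

theorem sum_splitWrtComposition_nil (f : List (List α) → M) :
    ∑ J : Composition ([] : List α).length, f (([] : List α).splitWrtComposition J) = f [] := by
  have hblocks (J : Composition ([] : List α).length) : J.blocks = [] := J.blocks_eq_nil.2 rfl
  have hcard : Fintype.card (Composition ([] : List α).length) = 1 := composition_card 0
  simp only [List.splitWrtComposition, hblocks, List.splitWrtCompositionAux, sum_const, card_univ,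
    hcard, one_smul]

theorem splitWrtComposition_flatten_of_map_length {n : ℕ} {L : List (List α)} (J : Composition n)
    (h : L.map List.length = J.blocks) : L.flatten.splitWrtComposition J = L := by
  obtain rfl : n = L.flatten.length := by rw [List.length_flatten, h, J.blocks_sum]
  exact List.splitWrtComposition_flatten L J h

theorem reverse_splitWrtComposition_reverse (w : List α) (J : Composition w.length) :
    w.reverse.splitWrtComposition J.reverse =
      ((w.splitWrtComposition J).map List.reverse).reverse := by
  have hlength : ((w.splitWrtComposition J).map List.reverse).reverse.map List.length =
      J.reverse.blocks := by
    rw [List.map_reverse, List.map_map, Composition.reverse]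
    simp only [Function.comp_def, List.length_reverse]
    rw [List.map_length_splitWrtComposition]
  have hsplit := splitWrtComposition_flatten_of_map_length J.reverse hlength
  rwa [← List.reverse_flatten, List.flatten_splitWrtComposition] at hsplit

end Compositions

section Letters

variable {A : Type*} (R : Type*) [Semiring R]

/-- The linear map `w ↦ a w` on formal combinations of words. -/
noncomputable def prependLetter (a : A) : (List A →₀ R) →ₗ[R] (List A →₀ R) :=
  Finsupp.lmapDomain R R (a :: ·)

/-- The linear map `w ↦ w a` on formal combinations of words. -/
noncomputable def appendLetter (a : A) : (List A →₀ R) →ₗ[R] (List A →₀ R) :=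
  Finsupp.lmapDomain R R (· ++ [a])

variable {R}

@[simp]
theorem prependLetter_single (a : A) (w : List A) (c : R) :
    prependLetter R a (single w c) = single (a :: w) c :=
  Finsupp.mapDomain_single

@[simp]
theorem appendLetter_single (a : A) (w : List A) (c : R) :
    appendLetter R a (single w c) = single (w ++ [a]) c :=
  Finsupp.mapDomain_single

theorem appendLetter_prependLetter (a b : A) (x : List A →₀ R) :
    appendLetter R b (prependLetter R a x) = prependLetter R a (appendLetter R b x) := by
  simp only [appendLetter, prependLetter, Finsupp.lmapDomain_apply, ← Finsupp.mapDomain_comp]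
  rfl

end Letters

section Product

variable {A : Type*} [Add A] (R : Type*) [Semiring R]

/-- The quasi-shuffle product of two words over an alphabet with an addition, `[a, b] = a + b`. -/
noncomputable def quasiShuffle : List A → List A → (List A →₀ R)
  | [], v => single v 1
  | a :: u, [] => single (a :: u) 1
  | a :: u, b :: v =>
      prependLetter R a (quasiShuffle u (b :: v)) + prependLetter R b (quasiShuffle (a :: u) v) +
        prependLetter R (a + b) (quasiShuffle u v)
  termination_by u v => u.length + v.length

/-- Left quasi-shuffle multiplication by the word `u`. -/
noncomputable def quasiShuffleLeft (u : List A) : (List A →₀ R) →ₗ[R] (List A →₀ R) :=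
  Finsupp.linearCombination R (quasiShuffle R u)

/-- The quasi-shuffle product of a list of words. -/
noncomputable def quasiShuffleProd (L : List (List A)) : List A →₀ R :=
  L.foldr (fun u x => quasiShuffleLeft R u x) (single [] 1)

variable {R}

@[simp]
theorem quasiShuffle_nil_left (v : List A) : quasiShuffle R [] v = single v 1 := by
  rw [quasiShuffle]

@[simp]
theorem quasiShuffle_nil_right (u : List A) : quasiShuffle R u [] = single u 1 := by
  cases u <;> rw [quasiShuffle]

theorem quasiShuffle_cons_cons (a b : A) (u v : List A) :
    quasiShuffle R (a :: u) (b :: v) =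
      prependLetter R a (quasiShuffle R u (b :: v)) +
        prependLetter R b (quasiShuffle R (a :: u) v) +
        prependLetter R (a + b) (quasiShuffle R u v) := by
  rw [quasiShuffle]

theorem quasiShuffle_concat_concat (u v : List A) (a b : A) :
    quasiShuffle R (u ++ [a]) (v ++ [b]) =
      appendLetter R a (quasiShuffle R u (v ++ [b])) +
        appendLetter R b (quasiShuffle R (u ++ [a]) v) +
        appendLetter R (a + b) (quasiShuffle R u v) := by
  induction u generalizing v with
  | nil =>
    induction v with
    | nil =>
      simp only [List.nil_append, quasiShuffle_cons_cons, quasiShuffle_nil_left,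
        quasiShuffle_nil_right, prependLetter_single, appendLetter_single, List.cons_append]
      abel
    | cons d v ih =>
      simp only [List.nil_append, List.cons_append] at ih ⊢
      simp only [quasiShuffle_cons_cons, quasiShuffle_nil_left, ih, map_add, prependLetter_single,
        appendLetter_single, appendLetter_prependLetter, List.cons_append]
      abel
  | cons c u ihu =>
    induction v with
    | nil =>
      have ih := ihu []
      simp only [List.nil_append, List.cons_append] at ih ⊢
      simp only [quasiShuffle_cons_cons, quasiShuffle_nil_right, ih, map_add, prependLetter_single,
        appendLetter_single, appendLetter_prependLetter, List.cons_append]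
      abel
    | cons d v ihv =>
      have ih := ihu (d :: v)
      simp only [List.cons_append] at ih ihv ⊢
      simp only [quasiShuffle_cons_cons, ih, ihv, ihu, map_add, appendLetter_prependLetter]
      abel

@[simp]
theorem quasiShuffleLeft_single (u v : List A) :
    quasiShuffleLeft R u (single v 1) = quasiShuffle R u v := by
  rw [quasiShuffleLeft, Finsupp.linearCombination_single, one_smul]

theorem quasiShuffleLeft_nil (x : List A →₀ R) : quasiShuffleLeft R [] x = x := by
  have h : quasiShuffleLeft R ([] : List A) = LinearMap.id := by
    ext v : 2
    simp
  rw [h, LinearMap.id_apply]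

theorem quasiShuffleLeft_concat_appendLetter (u : List A) (a b : A) (x : List A →₀ R) :
    quasiShuffleLeft R (u ++ [a]) (appendLetter R b x) =
      appendLetter R a (quasiShuffleLeft R u (appendLetter R b x)) +
        appendLetter R b (quasiShuffleLeft R (u ++ [a]) x) +
        appendLetter R (a + b) (quasiShuffleLeft R u x) := by
  have h : quasiShuffleLeft R (u ++ [a]) ∘ₗ appendLetter R b =
      appendLetter R a ∘ₗ quasiShuffleLeft R u ∘ₗ appendLetter R b +
        appendLetter R b ∘ₗ quasiShuffleLeft R (u ++ [a]) +
        appendLetter R (a + b) ∘ₗ quasiShuffleLeft R u := by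
    ext v : 2
    simp [quasiShuffle_concat_concat]
  exact LinearMap.congr_fun h x

end Product

section Contractions

variable {A : Type*} [AddMonoid A] (R : Type*) [Semiring R]

/-- The sum of the reversals of the contractions `J[w]` over all compositions `J` of the length of
`w`. Reversing makes the first block of `J` the last letter, which suits splitting from the left.
It is `C(w)` in the telescoping argument. -/
noncomputable def reversedContractionSum (w : List A) : List A →₀ R :=
  ∑ J : Composition w.length, single ((w.splitWrtComposition J).map List.sum).reverse 1

/-- The element `Y(u, v)` of the telescoping argument: the part of the product of `u` and
`reversedContractionSum R v` in which the last letter comes from the first block of `v` alone. -/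
noncomputable def firstBlockSum (u v : List A) : List A →₀ R :=
  ∑ i ∈ range v.length, appendLetter R (v.take (i + 1)).sum
    (quasiShuffleLeft R u (reversedContractionSum R (v.drop (i + 1))))

variable {R}

@[simp]
theorem reversedContractionSum_nil : reversedContractionSum R ([] : List A) = single [] 1 :=
  sum_splitWrtComposition_nil fun L : List (List A) => single (L.map List.sum).reverse (1 : R)

theorem reversedContractionSum_of_ne_nil {w : List A} (hw : w ≠ []) :
    reversedContractionSum R w =
      ∑ i ∈ range w.length, appendLetter R (w.take (i + 1)).sum
        (reversedContractionSum R (w.drop (i + 1))) := by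
  rw [reversedContractionSum, sum_splitWrtComposition_of_ne_nil
    (fun L : List (List A) => single (L.map List.sum).reverse (1 : R)) hw]
  refine sum_congr rfl fun i _ => ?_
  rw [reversedContractionSum, List.length_drop, map_sum]
  simp only [appendLetter_single, List.map_cons, List.reverse_cons]

theorem firstBlockSum_nil_left {w : List A} (hw : w ≠ []) :
    firstBlockSum R [] w = reversedContractionSum R w := by
  simp only [firstBlockSum, quasiShuffleLeft_nil, reversedContractionSum_of_ne_nil hw]

@[simp]
theorem firstBlockSum_nil_right (u : List A) : firstBlockSum R u [] = 0 := rfl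

theorem firstBlockSum_cons_right (u : List A) (a : A) (v : List A) :
    firstBlockSum R u (a :: v) =
      (∑ i ∈ range v.length, appendLetter R (a + (v.take (i + 1)).sum)
        (quasiShuffleLeft R u (reversedContractionSum R (v.drop (i + 1))))) +
      appendLetter R a (quasiShuffleLeft R u (reversedContractionSum R v)) := by
  simp [firstBlockSum, sum_range_succ']

theorem quasiShuffleLeft_concat_reversedContractionSum (u : List A) (a : A) (v : List A) :
    quasiShuffleLeft R (u ++ [a]) (reversedContractionSum R v) =
      firstBlockSum R u (a :: v) + firstBlockSum R (u ++ [a]) v := by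
  rw [firstBlockSum_cons_right]
  rcases eq_or_ne v [] with rfl | hv
  · simp
  · rw [firstBlockSum, reversedContractionSum_of_ne_nil hv]
    simp only [map_sum, quasiShuffleLeft_concat_appendLetter, sum_add_distrib]
    abel

end Contractions

section AlternatingSums

variable {A : Type*} [AddMonoid A] (R : Type*) [Ring R]

/-- The sum of the products `w₁ * ⋯ * w_k` over the decompositions `w = w₁ ⋯ w_k` into nonempty
subwords, with the sign `(-1) ^ (w.length - k)`. -/
noncomputable def alternatingProductSum (w : List A) : List A →₀ R :=
  ∑ J : Composition w.length,
    (-1 : R) ^ (w.length - J.length) • quasiShuffleProd R (w.splitWrtComposition J)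

variable {R}

theorem reversedContractionSum_eq_alternating_sum {w : List A} (hw : w ≠ []) :
    reversedContractionSum R w =
      ∑ i ∈ range w.length, (-1 : R) ^ i •
        quasiShuffleLeft R (w.take (i + 1)) (reversedContractionSum R (w.drop (i + 1))) := by
  let y (i : ℕ) : List A →₀ R :=
    (-1 : R) ^ i • firstBlockSum R (w.take i) (w.drop i)
  have hy (i : ℕ) (hi : i ∈ range w.length) : y i - y (i + 1) = (-1 : R) ^ i •
      quasiShuffleLeft R (w.take (i + 1)) (reversedContractionSum R (w.drop (i + 1))) := by
    replace hi := mem_range.1 hi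
    rw [List.take_succ_eq_append_getElem hi, quasiShuffleLeft_concat_reversedContractionSum,
      ← List.drop_eq_getElem_cons hi, ← List.take_succ_eq_append_getElem hi]
    simp only [y, pow_succ, mul_neg_one, neg_smul, sub_neg_eq_add, smul_add]
  rw [← sum_congr rfl hy, sum_range_sub']
  simp [y, firstBlockSum_nil_left hw]

@[simp]
theorem alternatingProductSum_nil : alternatingProductSum R ([] : List A) = single [] 1 := by
  have hsplit := sum_splitWrtComposition_nil
    fun L : List (List A) => (-1 : R) ^ (0 - L.length) • quasiShuffleProd R L
  simpa [alternatingProductSum, quasiShuffleProd] using hsplit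

theorem alternatingProductSum_of_ne_nil {w : List A} (hw : w ≠ []) :
    alternatingProductSum R w =
      ∑ i ∈ range w.length, (-1 : R) ^ i •
        quasiShuffleLeft R (w.take (i + 1)) (alternatingProductSum R (w.drop (i + 1))) := by
  have hsplit := sum_splitWrtComposition_of_ne_nil
    (fun L : List (List A) => (-1 : R) ^ (w.length - L.length) • quasiShuffleProd R L) hw
  simp only [List.length_splitWrtComposition, List.length_cons] at hsplit
  rw [alternatingProductSum, hsplit]
  refine sum_congr rfl fun i hi => ?_
  rw [alternatingProductSum, List.length_drop, map_sum, Finset.smul_sum]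
  refine sum_congr rfl fun J _ => ?_
  have hexp : w.length - (J.length + 1) = i + (w.length - (i + 1) - J.length) := by
    have hJ := J.length_le
    have hlt := mem_range.1 hi
    lia
  rw [hexp, map_smul, smul_smul, ← pow_add, quasiShuffleProd, List.foldr_cons, quasiShuffleProd]

theorem reversedContractionSum_eq_alternatingProductSum (w : List A) :
    reversedContractionSum R w = alternatingProductSum R w := by
  induction h : w.length using Nat.strong_induction_on generalizing w with
  | _ n ih =>
    rcases eq_or_ne w [] with rfl | hw
    · simp
    · rw [reversedContractionSum_eq_alternating_sum hw, alternatingProductSum_of_ne_nil hw]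
      refine sum_congr rfl fun i hi => ?_
      have hlt : (w.drop (i + 1)).length < n := by
        have hiw := mem_range.1 hi
        rw [List.length_drop]
        lia
      rw [ih _ hlt _ rfl]

end AlternatingSums

section CommutativeAlphabets

variable {A R : Type*} [AddCommMonoid A]

theorem reversedContractionSum_reverse [Semiring R] (w : List A) :
    reversedContractionSum R w.reverse =
      ∑ J : Composition w.length, single ((w.splitWrtComposition J).map List.sum) 1 := by
  rw [reversedContractionSum, List.length_reverse, ← Composition.reverse_bijective.sum_comp]
  refine Fintype.sum_congr _ _ fun J => ?_
  rw [reverse_splitWrtComposition_reverse, List.map_reverse, List.reverse_reverse, List.map_map]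
  simp only [Function.comp_def, List.sum_reverse]

theorem barw_eq_products_general [Ring R] (w : List A) :
    ∑ J : Composition w.length, single ((w.splitWrtComposition J).map List.sum) (1 : R) =
      ∑ J : Composition w.length,
        (-1 : R) ^ (w.length - J.length) •
          quasiShuffleProd R (w.reverse.splitWrtComposition J) := by
  rw [← reversedContractionSum_reverse, reversedContractionSum_eq_alternatingProductSum,
    alternatingProductSum, List.length_reverse]

end CommutativeAlphabets

section EulerAlgebra

variable {r : ℕ}

theorem contract_eq_map_sum {n : ℕ} (J : Composition n) (w : List (QLetter r)) :
    contract J w = (w.splitWrtComposition J).map List.sum := by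
  refine List.map_congr_left fun b _ => Prod.ext ?_ ?_
  · exact (map_list_sum (AddMonoidHom.fst ℕ (ZMod r)) b).symm
  · exact (map_list_sum (AddMonoidHom.snd ℕ (ZMod r)) b).symm

theorem qmulW_eq_quasiShuffle (u v : List (QLetter r)) : qmulW u v = quasiShuffle ℂ u v := by
  fun_induction qmulW u v with
  | case1 => simp
  | case2 => simp
  | case3 a u b v ih₁ ih₂ ih₃ =>
    rw [quasiShuffle_cons_cons, ih₁, ih₂, ih₃]
    rfl

theorem qmul_single_one (u : List (QLetter r)) (x : EulerAlg r) :
    qmul (single u 1) x = quasiShuffleLeft ℂ u x := by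
  rw [qmul, Finsupp.sum_single_index (by simp)]
  simp [quasiShuffleLeft, Finsupp.linearCombination_apply, qmulW_eq_quasiShuffle]

theorem qprodW_eq_quasiShuffleProd (L : List (List (QLetter r))) :
    qprodW L = quasiShuffleProd ℂ L := by
  induction L with
  | nil => rfl
  | cons u L ih => rw [qprodW, qmul_single_one, ih, quasiShuffleProd, quasiShuffleProd,
      List.foldr_cons]

end EulerAlgebra

/-- `w̄ = ∑_{J ∈ C(n)} J[w]` equals the alternating sum, over decompositions of the
reversed word into nonempty consecutive subwords, of the `*`-products of the pieces. -/
theorem barw_eq_products (r : ℕ) (hr : 0 < r) (w : List (QLetter r))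
    (hpos : ∀ a ∈ w, 0 < a.1) :
    (∑ J : Composition w.length, Finsupp.single (contract J w) (1 : ℂ)) =
      ∑ J : Composition w.length,
        (-1 : ℂ) ^ (w.length - J.length) • qprodW (w.reverse.splitWrtComposition J) := by
  simpa only [contract_eq_map_sum, qprodW_eq_quasiShuffleProd] using
    barw_eq_products_general (R := ℂ) w
end

section
/- For a word w = a₁⋯a_n in E_r with w̄ = Σ_{J ∈ C(n)} J[w], one has the inversion formula w = Σ_{w₁⋯w_k = R(w)} (−1)^{n−k} w̄₁ * ⋯ * w̄_k, sum over decompositions of the reversed word R(w) into nonempty consecutive subwords. -/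
open Finsupp Finset

/-- `w̄ = ∑_{J ∈ C(n)} J[w]` as an element of `E_r`. -/
noncomputable def barW {r : ℕ} (w : List (QLetter r)) : EulerAlg r :=
  ∑ J : Composition w.length, Finsupp.single (contract J w) (1 : ℂ)

/-- Quasi-shuffle product of a list of elements of `E_r`. -/
noncomputable def qprodE {r : ℕ} : List (EulerAlg r) → EulerAlg r
  | [] => Finsupp.single [] 1
  | x :: t => qmul x (qprodE t)

/-!
In the quasi-shuffle Hopf algebra the antipode sends `w` to `(-1)^|w|` times the bar of `R(w)`, so
that `∑ (-1)^|p| p̄ * R(q) = 0`, the sum being over the splittings `u = pq` of a nonempty word.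
Solving for the term with `p` empty expresses `R(u)` through the reversals of shorter words, and
iterating this yields the inversion formula.

To prove the vanishing, compare `H(a, u) = ∑ (-1)^|p| (ap)‾ * R(q)`, to be shown equal to `R(au)`,
with `K(a, u) = ∑ (-1)^|p| a p̄ * R(q)`. Either `a` is a block of its own or it merges with the next
letter, so `H(a, bu) = K(a, bu) - H([a,b], u)`. The quasi-shuffle recursion for `a p̄` and `R(qc)`
computes `K(a, uc)` from `K(a, u)` and sums that vanish by induction, giving
`K(a, bu) = R(abu) + R([a,b]u)`.
-/

section Compositions

variable {n : ℕ}

theorem sum_composition_zero {M : Type*} [AddCommMonoid M] (f : Composition 0 → M) :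
    ∑ J, f J = f (Composition.ones 0) := by
  have : Subsingleton (Composition 0) :=
    Fintype.card_le_one_iff_subsingleton.1 (composition_card 0).le
  exact Fintype.sum_subsingleton f _

/-- The composition of `n + 1` with first block `i + 1` followed by the blocks of `J`;
splitting off the first block makes every composition of `n + 1` arise this way. -/
def consComposition (i : Fin (n + 1)) (J : Composition (n - i)) : Composition (n + 1) where
  blocks := (i + 1) :: J.blocks
  blocks_pos := by
    rintro k (_ | ⟨_, hk⟩)
    exacts [Nat.succ_pos _, J.blocks_pos hk]
  blocks_sum := by
    rw [List.sum_cons, J.blocks_sum]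
    omega

theorem consComposition_bijective :
    Function.Bijective fun x : (i : Fin (n + 1)) × Composition (n - i) =>
      consComposition x.1 x.2 := by
  constructor
  · rintro ⟨i, J⟩ ⟨k, K⟩ h
    obtain ⟨hik, hJK⟩ := List.cons.inj (congrArg Composition.blocks h)
    obtain rfl : i = k := Fin.ext (Nat.succ_injective hik)
    obtain rfl : J = K := Composition.ext hJK
    rfl
  · rintro ⟨_ | ⟨k, l⟩, hpos, hsum⟩
    · simp at hsum
    · have hk : 0 < k := hpos List.mem_cons_self
      rw [List.sum_cons] at hsum
      refine ⟨⟨⟨k - 1, by omega⟩, ⟨l, fun h => hpos (List.mem_cons_of_mem k h), ?_⟩⟩, ?_⟩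
      · dsimp only
        omega
      · exact Composition.ext (congrArg (· :: l) (Nat.sub_add_cancel hk))

theorem sum_composition_succ {M : Type*} [AddCommMonoid M] (f : Composition (n + 1) → M) :
    ∑ J, f J = ∑ i : Fin (n + 1), ∑ J : Composition (n - i), f (consComposition i J) := by
  rw [← consComposition_bijective.sum_comp, Fintype.sum_sigma]

theorem splitWrtComposition_consComposition {α : Type*} (a : α) (u : List α) (i : Fin (n + 1))
    (J : Composition (n - i)) :
    (a :: u).splitWrtComposition (consComposition i J) =
      (a :: u.take i) :: (u.drop i).splitWrtComposition J := by
  simp only [List.splitWrtComposition, consComposition, List.splitWrtCompositionAux_cons,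
    List.take_succ_cons, List.drop_succ_cons]

theorem length_consComposition (i : Fin (n + 1)) (J : Composition (n - i)) :
    (consComposition i J).length = J.length + 1 :=
  rfl

end Compositions

section EulerAlgebra

variable {r : ℕ}

theorem ladd_eq_add (a b : QLetter r) : ladd a b = a + b :=
  rfl

/-- The linear map `w ↦ aw` on `E_r`, prefixing the letter `a` to every word. -/
noncomputable def consHom (a : QLetter r) : EulerAlg r →ₗ[ℂ] EulerAlg r :=
  Finsupp.lmapDomain ℂ ℂ (a :: ·)

theorem consHom_single (a : QLetter r) (w : List (QLetter r)) (c : ℂ) :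
    consHom a (single w c) = single (a :: w) c :=
  Finsupp.mapDomain_single

/-- The quasi-shuffle product `qmul` as a bilinear map. -/
noncomputable def qmulHom : EulerAlg r →ₗ[ℂ] EulerAlg r →ₗ[ℂ] EulerAlg r :=
  Finsupp.linearCombination ℂ fun w => Finsupp.linearCombination ℂ fun v => qmulW w v

theorem qmul_eq_qmulHom (x y : EulerAlg r) : qmul x y = qmulHom x y := by
  simp only [qmul, qmulHom, Finsupp.linearCombination_apply, Finsupp.sum, LinearMap.sum_apply,
    LinearMap.smul_apply, Finset.smul_sum, mul_smul]

theorem qmulHom_single_single (w v : List (QLetter r)) (c d : ℂ) :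
    qmulHom (single w c) (single v d) = (c * d) • qmulW w v := by
  simp [qmulHom, mul_smul]

theorem qmulHom_one_single (w : List (QLetter r)) (c : ℂ) :
    qmulHom (single [] 1) (single w c) = single w c := by
  simp [qmulHom_single_single, qmulW]

theorem qmulHom_one (x : EulerAlg r) : qmulHom x (single [] 1) = x := by
  induction x using Finsupp.induction_linear with
  | zero => simp
  | add x y hx hy => rw [map_add, LinearMap.add_apply, hx, hy]
  | single w c => cases w <;> simp [qmulHom_single_single, qmulW]

theorem qmulHom_consHom_consHom (a b : QLetter r) (x y : EulerAlg r) :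
    qmulHom (consHom a x) (consHom b y) =
      consHom a (qmulHom x (consHom b y)) + consHom b (qmulHom (consHom a x) y) +
        consHom (a + b) (qmulHom x y) := by
  induction x using Finsupp.induction_linear with
  | zero => simp
  | add x x' hx hx' =>
    simp only [map_add, LinearMap.add_apply, hx, hx']
    abel
  | single w c =>
    induction y using Finsupp.induction_linear with
    | zero => simp
    | add y y' hy hy' =>
      simp only [map_add, hy, hy']
      abel
    | single v d =>
      simp only [consHom_single, qmulHom_single_single, map_smul, ← smul_add]
      rw [qmulW, ladd_eq_add]
      rfl

theorem barW_nil : barW ([] : List (QLetter r)) = single [] 1 :=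
  sum_composition_zero _

theorem barW_cons (a : QLetter r) (u : List (QLetter r)) :
    barW (a :: u) =
      ∑ i ∈ range (u.length + 1), consHom (a :: u.take i).sum (barW (u.drop i)) := by
  rw [barW, List.length_cons, sum_composition_succ, Finset.sum_range]
  refine Finset.sum_congr rfl fun i _ => ?_
  rw [barW, List.length_drop, map_sum]
  simp only [consHom_single, contract_eq_map_sum, splitWrtComposition_consComposition,
    List.map_cons]

theorem barW_singleton (a : QLetter r) : barW [a] = consHom a (barW []) := by
  simp [barW_cons]

theorem barW_cons_cons (a b : QLetter r) (u : List (QLetter r)) :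
    barW (a :: b :: u) = consHom a (barW (b :: u)) + barW ((a + b) :: u) := by
  rw [barW_cons, List.length_cons, Finset.sum_range_succ', barW_cons (a + b), add_comm]
  simp [add_assoc]

/-- The alternating sum `∑ (-1)^|p| f(p) * R(q)` over the splittings `u = pq`.
For `f = barW` it is the value at `R(u)` of the convolution of the identity with the antipode. -/
noncomputable def altRevConv (f : List (QLetter r) → EulerAlg r) (u : List (QLetter r)) :
    EulerAlg r :=
  ∑ i ∈ range (u.length + 1),
    (-1 : ℂ) ^ i • qmulHom (f (u.take i)) (single (u.drop i).reverse 1)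

theorem altRevConv_nil (f : List (QLetter r) → EulerAlg r) : altRevConv f [] = f [] := by
  simp [altRevConv, qmulHom_one]

theorem altRevConv_add (f g : List (QLetter r) → EulerAlg r) (u : List (QLetter r)) :
    altRevConv (fun p => f p + g p) u = altRevConv f u + altRevConv g u := by
  simp only [altRevConv, map_add, LinearMap.add_apply, smul_add, Finset.sum_add_distrib]

theorem altRevConv_cons (f : List (QLetter r) → EulerAlg r) (a : QLetter r)
    (u : List (QLetter r)) :
    altRevConv f (a :: u) =
      qmulHom (f []) (single (a :: u).reverse 1) - altRevConv (fun p => f (a :: p)) u := by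
  rw [altRevConv, List.length_cons, Finset.sum_range_succ', add_comm, sub_eq_add_neg, altRevConv,
    ← Finset.sum_neg_distrib]
  simp [pow_succ]

theorem altRevConv_concat (f : List (QLetter r) → EulerAlg r) (u : List (QLetter r))
    (c : QLetter r) :
    altRevConv f (u ++ [c]) =
      ∑ i ∈ range (u.length + 1),
          (-1 : ℂ) ^ i • qmulHom (f (u.take i)) (consHom c (single (u.drop i).reverse 1)) +
        (-1 : ℂ) ^ (u.length + 1) • f (u ++ [c]) := by
  rw [altRevConv, List.length_append, List.length_singleton, Finset.sum_range_succ]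
  congr 1
  · refine Finset.sum_congr rfl fun i hi => ?_
    have hi : i ≤ u.length := Nat.lt_succ_iff.1 (Finset.mem_range.1 hi)
    rw [List.take_append_of_le_length hi, List.drop_append_of_le_length hi, List.reverse_concat,
      consHom_single]
  · simp [List.take_of_length_le, List.drop_of_length_le, qmulHom_one]

theorem altRevConv_consHom_concat (f : List (QLetter r) → EulerAlg r) (a c : QLetter r)
    (u : List (QLetter r)) :
    altRevConv (fun p => consHom a (f p)) (u ++ [c]) =
      consHom a (altRevConv f (u ++ [c])) +
        consHom c (altRevConv (fun p => consHom a (f p)) u) +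
        consHom (a + c) (altRevConv f u) := by
  simp only [altRevConv_concat, qmulHom_consHom_consHom, smul_add, Finset.sum_add_distrib]
  simp only [altRevConv, map_add, map_sum, map_smul]
  abel

theorem altRevConv_barW_nil : altRevConv barW ([] : List (QLetter r)) = single [] 1 := by
  rw [altRevConv_nil, barW_nil]

theorem altRevConv_barW_cons (a : QLetter r) (u : List (QLetter r)) :
    altRevConv barW (a :: u) =
      single (a :: u).reverse 1 - altRevConv (fun p => barW (a :: p)) u := by
  rw [altRevConv_cons, barW_nil, qmulHom_one_single]

theorem altRevConv_barW_comp_cons_cons (a b : QLetter r) (u : List (QLetter r)) :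
    altRevConv (fun p => barW (a :: p)) (b :: u) =
      altRevConv (fun p => consHom a (barW p)) (b :: u) -
        altRevConv (fun p => barW ((a + b) :: p)) u := by
  simp only [altRevConv_cons, barW_singleton, barW_cons_cons, altRevConv_add, sub_sub]

theorem altRevConv_consHom_barW_cons (a b : QLetter r) (u : List (QLetter r))
    (hzero : ∀ p ≠ [], p <+: b :: u → altRevConv barW p = 0) :
    altRevConv (fun p => consHom a (barW p)) (b :: u) =
      single (a :: b :: u).reverse 1 + single ((a + b) :: u).reverse 1 := by
  induction u using List.reverseRecOn with
  | nil =>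
    have hb : altRevConv barW [b] = 0 := hzero [b] (List.cons_ne_nil _ _) List.prefix_rfl
    rw [← List.nil_append [b], altRevConv_consHom_concat, List.nil_append, hb, altRevConv_nil,
      altRevConv_barW_nil]
    simp [barW_nil, consHom_single]
  | append_singleton u c ih =>
    have hprefix : b :: u <+: b :: (u ++ [c]) := List.prefix_append (b :: u) [c]
    have hu := hzero (b :: u) (List.cons_ne_nil _ _) hprefix
    have huc := hzero (b :: (u ++ [c])) (List.cons_ne_nil _ _) List.prefix_rfl
    rw [← List.cons_append] at huc ⊢
    rw [altRevConv_consHom_concat, huc, hu, ih fun p hp h => hzero p hp (h.trans hprefix)]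
    simp [consHom_single]

theorem altRevConv_barW_comp_cons (a : QLetter r) (u : List (QLetter r)) :
    altRevConv (fun p => barW (a :: p)) u = single (a :: u).reverse 1 := by
  induction hn : u.length using Nat.strong_induction_on generalizing a u with
  | _ n ih =>
    subst hn
    cases u with
    | nil => simp [altRevConv_nil, barW_singleton, barW_nil, consHom_single]
    | cons b u =>
      have hzero : ∀ p ≠ [], p <+: b :: u → altRevConv barW p = 0 := by
        rintro (_ | ⟨c, p⟩) hp hprefix
        · exact absurd rfl hp
        · rw [altRevConv_barW_cons, ih p.length hprefix.length_le c p rfl, sub_self]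
      rw [altRevConv_barW_comp_cons_cons, altRevConv_consHom_barW_cons a b u hzero,
        ih u.length (Nat.lt_succ_self _) (a + b) u rfl, add_sub_cancel_right]

/-- The right-hand side of the inversion formula, with the word `u` in place of `R(w)`. -/
noncomputable def altBarProd (u : List (QLetter r)) : EulerAlg r :=
  ∑ J : Composition u.length,
    (-1 : ℂ) ^ (u.length - J.length) • qprodE ((u.splitWrtComposition J).map barW)

theorem altBarProd_nil : altBarProd ([] : List (QLetter r)) = single [] 1 := by
  refine (sum_composition_zero _).trans ?_
  simp [List.splitWrtComposition, List.splitWrtCompositionAux, qprodE]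

theorem altBarProd_cons (a : QLetter r) (u : List (QLetter r)) :
    altBarProd (a :: u) =
      ∑ i ∈ range (u.length + 1),
        (-1 : ℂ) ^ i • qmulHom (barW (a :: u.take i)) (altBarProd (u.drop i)) := by
  rw [altBarProd, List.length_cons, sum_composition_succ, Finset.sum_range]
  refine Finset.sum_congr rfl fun i _ => ?_
  rw [altBarProd, List.length_drop, map_sum, Finset.smul_sum]
  refine Finset.sum_congr rfl fun J _ => ?_
  have hexp : u.length + 1 - (J.length + 1) = i + (u.length - i - J.length) := by
    have := J.length_le
    omega
  rw [splitWrtComposition_consComposition, length_consComposition, hexp, List.map_cons, qprodE,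
    qmul_eq_qmulHom, map_smul, smul_smul, pow_add]

theorem altBarProd_eq_single_reverse (u : List (QLetter r)) :
    altBarProd u = single u.reverse 1 := by
  induction hn : u.length using Nat.strong_induction_on generalizing u with
  | _ n ih =>
    subst hn
    cases u with
    | nil => exact altBarProd_nil
    | cons a u =>
      rw [altBarProd_cons, ← altRevConv_barW_comp_cons, altRevConv]
      refine Finset.sum_congr rfl fun i _ => ?_
      rw [ih (u.drop i).length (by simp) (u.drop i) rfl]

end EulerAlgebra

/-- Inversion formula: `w` as the alternating sum over decompositions of the reversed
word of `*`-products of the `w̄ᵢ`. -/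
theorem w_eq_bar_products (r : ℕ) (hr : 0 < r) (w : List (QLetter r))
    (hpos : ∀ a ∈ w, 0 < a.1) :
    Finsupp.single w (1 : ℂ) =
      ∑ J : Composition w.length,
        (-1 : ℂ) ^ (w.length - J.length) •
          qprodE ((w.reverse.splitWrtComposition J).map barW) := by
  have hinv := altBarProd_eq_single_reverse w.reverse
  rw [altBarProd, List.length_reverse, List.reverse_reverse] at hinv
  exact hinv.symm
end
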